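/- arXiv:2510.10093 — 4 statements merged into one kernel-verified Lean document; each statement's English description precedes it below -/
import Mathlib

section
/- Let x>0, let r,s,t ∈ ℂ with r not a positive integer and Re(t) > max{0, 1−Re(r), 1−Re(s), 2−Re(r)−Re(s)}, and let M ∈ ℕ∪{0}. Then (1/Γ(t)) ∫₀^∞ y^{t−1} Li_s(e^{−xy}) ( Li_r(e^{−y}) − Γ(1−r) y^{r−1} − ∑_{k=0}^{M} (−1)^k ζ(r−k) y^k/k! ) dy = Θ(r,s,t,x) − Γ(1−r)Γ(t+r−1)ζ(t+s+r−1)/(x^{t+r−1}Γ(t)) − ∑_{k=0}^{M} ((−1)^k/k!) ζ(r−k) Γ(t+k) ζ(t+k+s)/(x^{t+k} Γ(t)), and in particular both the integral and the double series defining Θ converge absolutely. -/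
open Complex Filter MeasureTheory Set

/-- Polylogarithm `Li_s(z) = ∑_{u ≥ 1} z^u / u^s` for real `z` and complex order `s`. -/
noncomputable def Li (s : ℂ) (z : ℝ) : ℂ :=
  ∑' u : ℕ, (z : ℂ) ^ (u + 1) / ((u + 1 : ℕ) : ℂ) ^ s

/-- The generalized Mordell–Tornheim zeta function
`Θ(r,s,t,x) = ∑_{n,m ≥ 1} n^{-r} m^{-s} (n + m x)^{-t}`. -/
noncomputable def Theta (r s t : ℂ) (x : ℝ) : ℂ :=
  ∑' n : ℕ, ∑' m : ℕ,
    1 / (((n + 1 : ℕ) : ℂ) ^ r * ((m + 1 : ℕ) : ℂ) ^ s *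
      (((n + 1 : ℕ) : ℂ) + ((m + 1 : ℕ) : ℂ) * (x : ℂ)) ^ t)

/-- The integrand of Proposition `first`. -/
noncomputable def integrandF (r s : ℂ) (x : ℝ) (M : ℕ) (t : ℂ) (y : ℝ) : ℂ :=
  (y : ℂ) ^ (t - 1) * Li s (Real.exp (-(x * y))) *
    (Li r (Real.exp (-y)) - Complex.Gamma (1 - r) * (y : ℂ) ^ (r - 1) -
      ∑ k ∈ Finset.range (M + 1),
        (-1) ^ k * riemannZeta (r - (k : ℕ)) * (y : ℂ) ^ (k : ℕ) / (Nat.factorial k : ℂ))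

/-- The termwise sum of a series of integrable functions with summable `L¹` norms is integrable. -/
lemma integrable_of_hasSum_of_summable_integral_norm {α ι E : Type*} [MeasurableSpace α]
    {μ : Measure α} [Countable ι] [NormedAddCommGroup E] {F : ι → α → E} {f : α → E}
    (hF_int : ∀ i, Integrable (F i) μ) (hF_sum : Summable fun i ↦ ∫ a, ‖F i a‖ ∂μ)
    (hf : ∀ᵐ a ∂μ, HasSum (fun i ↦ F i a) (f a)) : Integrable f μ := by
  refine ⟨aestronglyMeasurable_of_tendsto_ae (u := atTop)
    (f := fun (S : Finset ι) a ↦ ∑ i ∈ S, F i a)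
    (fun S ↦ (integrable_finsetSum S fun i _ ↦ hF_int i).1) hf, ?_⟩
  have hle : ∫⁻ a, ‖f a‖ₑ ∂μ ≤ ∫⁻ a, ∑' i, ‖F i a‖ₑ ∂μ := by
    refine lintegral_mono_ae ?_
    filter_upwards [hf] with a ha
    refine le_of_tendsto (continuous_enorm.tendsto _ |>.comp ha) (Eventually.of_forall fun S ↦ ?_)
    exact (enorm_sum_le _ _).trans (ENNReal.sum_le_tsum S)
  refine hle.trans_lt ?_
  rw [lintegral_tsum fun i ↦ (hF_int i).1.enorm]
  have (i : ι) : ∫⁻ a, ‖F i a‖ₑ ∂μ = ‖∫ a, ‖F i a‖ ∂μ‖ₑ := by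
    rw [← ofReal_integral_norm_eq_lintegral_enorm (hF_int i),
      Real.enorm_of_nonneg (integral_nonneg fun a ↦ norm_nonneg (F i a))]
  simp_rw [this]
  exact (ENNReal.tsum_coe_ne_top_iff_summable.2 <| NNReal.summable_coe.1 hF_sum.abs).lt_top

/-- A generalized Dirichlet series `∑ aᵢ exp(-pᵢ y)` whose formal Mellin transform converges
absolutely has a convergent Mellin transform. -/
lemma mellinConvergent_of_hasSum_exp {ι : Type*} [Countable ι] {a : ι → ℂ} {p : ι → ℝ}
    {F : ℝ → ℂ} {s : ℂ} (hp : ∀ i, 0 < p i) (hs : 0 < s.re)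
    (hF : ∀ y ∈ Ioi (0 : ℝ), HasSum (fun i ↦ a i * Real.exp (-p i * y)) (F y))
    (h_sum : Summable fun i ↦ ‖a i‖ / (p i) ^ s.re) : MellinConvergent F s := by
  refine integrable_of_hasSum_of_summable_integral_norm
    (F := fun i (y : ℝ) ↦ (y : ℂ) ^ (s - 1) * (a i * Real.exp (-p i * y))) (fun i ↦ ?_) ?_
    ((ae_restrict_iff' measurableSet_Ioi).2 <| Eventually.of_forall fun y hy ↦
      (hF y hy).mul_left _)
  · simp_rw [← mul_assoc, mul_comm _ (a i), mul_assoc]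
    have := Complex.GammaIntegral_convergent hs
    rw [← mul_zero (p i), ← integrableOn_Ioi_comp_mul_left_iff _ _ (hp i)] at this
    refine (IntegrableOn.congr_fun (this.const_mul (1 / p i ^ (s - 1)))
      (fun t (ht : 0 < t) ↦ ?_) measurableSet_Ioi).const_mul _
    simp_rw [mul_comm (↑(Real.exp _) : ℂ), ← mul_assoc, neg_mul, ofReal_mul]
    rw [mul_cpow_ofReal_nonneg (hp i).le ht.le, ← mul_assoc, one_div, inv_mul_cancel₀, one_mul]
    rw [Ne, cpow_eq_zero_iff, not_and_or]
    exact Or.inl (ofReal_ne_zero.mpr (hp i).ne')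
  · convert! h_sum.mul_left (Real.Gamma s.re) using 2 with i
    have := Real.integral_rpow_mul_exp_neg_mul_Ioi hs (hp i)
    simp_rw [← neg_mul (p i), one_div, Real.inv_rpow (hp i).le] at this
    calc _ = ∫ y in Ioi (0 : ℝ), ‖a i‖ * (y ^ (s.re - 1) * Real.exp (-p i * y)) := by
          refine setIntegral_congr_fun measurableSet_Ioi (fun y hy ↦ ?_)
          simp only [norm_mul, norm_real, Real.norm_eq_abs, Real.abs_exp,
            norm_cpow_eq_rpow_re_of_pos hy, sub_re, one_re]
          ring
      _ = _ := by rw [integral_const_mul, this]; ring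

lemma summable_norm_Li_terms (s : ℂ) {z : ℝ} (hz0 : 0 ≤ z) (hz1 : z < 1) :
    Summable fun u : ℕ ↦ ‖(z : ℂ) ^ (u + 1) / ((u + 1 : ℕ) : ℂ) ^ s‖ := by
  obtain ⟨k, hk⟩ := exists_nat_ge (-s.re)
  have h := (summable_nat_add_iff 1).2
    (summable_pow_mul_geometric_of_norm_lt_one (R := ℝ) k (r := z)
      (by rwa [Real.norm_of_nonneg hz0]))
  refine h.of_nonneg_of_le (fun _ ↦ norm_nonneg _) fun u ↦ ?_
  rw [norm_div, norm_pow, norm_natCast_cpow_of_pos u.succ_pos, norm_real,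
    Real.norm_of_nonneg hz0, div_eq_mul_inv, ← Real.rpow_neg (by positivity), mul_comm]
  gcongr
  rw [← Real.rpow_natCast]
  exact Real.rpow_le_rpow_of_exponent_le (by simp) hk

lemma Li_term_eq (s : ℂ) (c y : ℝ) (u : ℕ) :
    ((Real.exp (-(c * y)) : ℝ) : ℂ) ^ (u + 1) / ((u + 1 : ℕ) : ℂ) ^ s =
      1 / ((u + 1 : ℕ) : ℂ) ^ s * (Real.exp (-(((u + 1 : ℕ) : ℝ) * c) * y) : ℝ) := by
  rw [← ofReal_pow, ← Real.exp_nat_mul, div_eq_mul_one_div, mul_comm]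
  have h : ((u + 1 : ℕ) : ℝ) * -(c * y) = -(((u + 1 : ℕ) : ℝ) * c) * y := by ring
  rw [h]

lemma exp_neg_mul_lt_one {c y : ℝ} (hc : 0 < c) (hy : 0 < y) : Real.exp (-(c * y)) < 1 := by
  rw [Real.exp_lt_one_iff]
  have := mul_pos hc hy
  linarith

lemma hasSum_Li_exp (s : ℂ) {c y : ℝ} (hc : 0 < c) (hy : 0 < y) :
    HasSum (fun u : ℕ ↦ 1 / ((u + 1 : ℕ) : ℂ) ^ s *
      (Real.exp (-(((u + 1 : ℕ) : ℝ) * c) * y) : ℝ)) (Li s (Real.exp (-(c * y)))) := by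
  simp_rw [← Li_term_eq]
  exact (summable_norm_Li_terms s (Real.exp_pos _).le (exp_neg_mul_lt_one hc hy)).of_norm.hasSum

/-- The Mellin transform of `y ↦ Li_s(e^{-cy})` is `Γ(a) ζ(a + s) / c^a`. -/
lemma hasMellin_Li_exp {s a : ℂ} {c : ℝ} (hc : 0 < c) (ha : 0 < a.re) (has : 1 < (a + s).re) :
    HasMellin (fun y : ℝ ↦ Li s (Real.exp (-(c * y)))) a
      (Gamma a * riemannZeta (a + s) / (c : ℂ) ^ a) := by
  have hp (u : ℕ) : 0 < ((u + 1 : ℕ) : ℝ) * c := by positivity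
  have hterm (u : ℕ) : 1 / ((u + 1 : ℕ) : ℂ) ^ (a + s) * (1 / (c : ℂ) ^ a) =
      1 / ((u + 1 : ℕ) : ℂ) ^ s / ((((u + 1 : ℕ) : ℝ) * c : ℝ) : ℂ) ^ a := by
    rw [ofReal_mul, mul_cpow_ofReal_nonneg (by positivity) hc.le, ofReal_natCast,
      cpow_add _ _ (Nat.cast_ne_zero.2 u.succ_ne_zero)]
    simp only [div_eq_mul_inv, mul_inv, one_mul]
    ring
  have hzeta : Summable fun u : ℕ ↦ 1 / ((u + 1 : ℕ) : ℂ) ^ (a + s) :=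
    (summable_nat_add_iff 1).2 (Complex.summable_one_div_nat_cpow.2 has)
  have hsum : Summable fun u : ℕ ↦
      ‖1 / ((u + 1 : ℕ) : ℂ) ^ s‖ / (((u + 1 : ℕ) : ℝ) * c) ^ a.re := by
    refine (hzeta.mul_right (1 / (c : ℂ) ^ a)).norm.congr fun u ↦ ?_
    rw [hterm, norm_div, norm_cpow_eq_rpow_re_of_pos (hp u)]
  have hF : ∀ y ∈ Ioi (0 : ℝ), HasSum (fun u : ℕ ↦ 1 / ((u + 1 : ℕ) : ℂ) ^ s *
      (Real.exp (-(((u + 1 : ℕ) : ℝ) * c) * y) : ℝ)) (Li s (Real.exp (-(c * y)))) :=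
    fun y hy ↦ hasSum_Li_exp s hc hy
  refine ⟨mellinConvergent_of_hasSum_exp hp ha hF hsum, ?_⟩
  rw [← (hasSum_mellin (fun u ↦ Or.inr (hp u)) ha hF hsum).tsum_eq,
    zeta_eq_tsum_one_div_nat_add_one_cpow has]
  simp_rw [mul_div_assoc, ← hterm]
  rw [tsum_mul_left, tsum_mul_right]
  push_cast
  ring

/-- Weighted AM-GM bound, splitting `(n + m x)^{-c}` into powers of `n` and of `m`. -/
lemma summable_mordellTornheim_real {a b c x : ℝ} (hx : 0 < x) (hc : 0 < c) (hac : 1 < a + c)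
    (hbc : 1 < b + c) (habc : 2 < a + b + c) :
    Summable fun p : ℕ × ℕ ↦ 1 / (((p.1 + 1 : ℕ) : ℝ) ^ a * ((p.2 + 1 : ℕ) : ℝ) ^ b *
      (((p.1 + 1 : ℕ) : ℝ) + ((p.2 + 1 : ℕ) : ℝ) * x) ^ c) := by
  obtain ⟨d, hd1, hd2⟩ : ∃ d, max 0 (1 - a) < d ∧ d < min c (b + c - 1) :=
    exists_between (max_lt (lt_min hc (by linarith)) (lt_min (by linarith) (by linarith)))
  obtain ⟨hd0, hda⟩ := max_lt_iff.1 hd1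
  obtain ⟨hdc, hdb⟩ := lt_min_iff.1 hd2
  have h1 : Summable fun n : ℕ ↦ 1 / ((n + 1 : ℕ) : ℝ) ^ (a + d) :=
    (summable_nat_add_iff 1).2 (Real.summable_one_div_nat_rpow.2 (by linarith))
  have h2 : Summable fun m : ℕ ↦ 1 / ((m + 1 : ℕ) : ℝ) ^ (b + (c - d)) :=
    (summable_nat_add_iff 1).2 (Real.summable_one_div_nat_rpow.2 (by linarith))
  have h12 := (h1.mul_of_nonneg h2 (fun _ ↦ by positivity) (fun _ ↦ by positivity)).mul_right
    (1 / x ^ (c - d))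
  refine h12.of_nonneg_of_le (fun _ ↦ by positivity) fun ⟨n, m⟩ ↦ ?_
  have hn : (0 : ℝ) < ((n + 1 : ℕ) : ℝ) := by positivity
  have hm : (0 : ℝ) < ((m + 1 : ℕ) : ℝ) := by positivity
  generalize ((n + 1 : ℕ) : ℝ) = N at *
  generalize ((m + 1 : ℕ) : ℝ) = K at *
  have hw1 : d / c ≤ 1 := (div_le_one hc).2 hdc.le
  have amgm := Real.geom_mean_le_arith_mean2_weighted (w₁ := d / c) (w₂ := 1 - d / c)
    (p₁ := N) (p₂ := K * x) (by positivity) (by linarith) hn.le (by positivity) (by ring)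
  have hle : N ^ (d / c) * (K * x) ^ (1 - d / c) ≤ N + K * x := by
    exact amgm.trans (add_le_add (mul_le_of_le_one_left hn.le hw1)
      (mul_le_of_le_one_left (by positivity) (by linarith [div_pos hd0 hc])))
  have hpow : N ^ d * (K ^ (c - d) * x ^ (c - d)) ≤ (N + K * x) ^ c := by
    calc _ = (N ^ (d / c) * (K * x) ^ (1 - d / c)) ^ c := by
          rw [Real.mul_rpow (by positivity) (by positivity), ← Real.rpow_mul hn.le,
            ← Real.rpow_mul (by positivity), ← Real.mul_rpow hm.le hx.le]
          congr 2 <;> field_simp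
      _ ≤ _ := Real.rpow_le_rpow (by positivity) hle hc.le
  calc _ ≤ 1 / (N ^ a * K ^ b * (N ^ d * (K ^ (c - d) * x ^ (c - d)))) := by gcongr
    _ = _ := by
      rw [Real.rpow_add hn, Real.rpow_add hm]
      field_simp

lemma norm_mordellTornheim_term {x : ℝ} (hx : 0 < x) (r s t : ℂ) (n m : ℕ) :
    ‖1 / (((n + 1 : ℕ) : ℂ) ^ r * ((m + 1 : ℕ) : ℂ) ^ s *
        (((n + 1 : ℕ) : ℂ) + ((m + 1 : ℕ) : ℂ) * (x : ℂ)) ^ t)‖ =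
      1 / (((n + 1 : ℕ) : ℝ) ^ r.re * ((m + 1 : ℕ) : ℝ) ^ s.re *
        (((n + 1 : ℕ) : ℝ) + ((m + 1 : ℕ) : ℝ) * x) ^ t.re) := by
  have hcast : ((n + 1 : ℕ) : ℂ) + ((m + 1 : ℕ) : ℂ) * (x : ℂ) =
      ((((n + 1 : ℕ) : ℝ) + ((m + 1 : ℕ) : ℝ) * x : ℝ) : ℂ) := by push_cast; ring
  rw [hcast, norm_div, norm_mul, norm_mul, norm_one, norm_natCast_cpow_of_pos n.succ_pos,
    norm_natCast_cpow_of_pos m.succ_pos, norm_cpow_eq_rpow_re_of_pos (by positivity)]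

/-- Absolute convergence of the generalized Mordell–Tornheim double series. -/
lemma summable_norm_mordellTornheim {x : ℝ} (hx : 0 < x) {r s t : ℂ} (ht : 0 < t.re)
    (hrt : 1 < r.re + t.re) (hst : 1 < s.re + t.re) (hrst : 2 < r.re + s.re + t.re) :
    Summable (fun p : ℕ × ℕ =>
      ‖1 / (((p.1 + 1 : ℕ) : ℂ) ^ r * ((p.2 + 1 : ℕ) : ℂ) ^ s *
        (((p.1 + 1 : ℕ) : ℂ) + ((p.2 + 1 : ℕ) : ℂ) * (x : ℂ)) ^ t)‖) := by
  simp_rw [norm_mordellTornheim_term hx]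
  exact summable_mordellTornheim_real hx ht hrt hst hrst

/-- The Mellin transform of `y ↦ Li_s(e^{-xy}) Li_r(e^{-y})` is `Γ(t) Θ(r,s,t,x)`. -/
lemma hasMellin_Li_mul_Li {x : ℝ} (hx : 0 < x) {r s t : ℂ} (ht : 0 < t.re)
    (hrt : 1 < r.re + t.re) (hst : 1 < s.re + t.re) (hrst : 2 < r.re + s.re + t.re) :
    HasMellin (fun y : ℝ ↦ Li s (Real.exp (-(x * y))) * Li r (Real.exp (-y))) t
      (Gamma t * Theta r s t x) := by
  have hsum := summable_norm_mordellTornheim hx ht hrt hst hrst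
  set a : ℕ × ℕ → ℂ := fun p ↦ 1 / (((p.1 + 1 : ℕ) : ℂ) ^ r * ((p.2 + 1 : ℕ) : ℂ) ^ s) with ha
  set q : ℕ × ℕ → ℝ := fun p ↦ ((p.1 + 1 : ℕ) : ℝ) + ((p.2 + 1 : ℕ) : ℝ) * x with hq
  have hp (p : ℕ × ℕ) : 0 < q p := by positivity
  have hterm (p : ℕ × ℕ) : 1 / (((p.1 + 1 : ℕ) : ℂ) ^ r * ((p.2 + 1 : ℕ) : ℂ) ^ s *
      (((p.1 + 1 : ℕ) : ℂ) + ((p.2 + 1 : ℕ) : ℂ) * (x : ℂ)) ^ t) = a p / (q p : ℂ) ^ t := by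
    have hcast : (q p : ℂ) = ((p.1 + 1 : ℕ) : ℂ) + ((p.2 + 1 : ℕ) : ℂ) * (x : ℂ) := by
      simp only [hq]; push_cast; ring
    rw [hcast, ha, div_div]
  have hsum' : Summable fun p ↦ ‖a p‖ / q p ^ t.re := by
    refine hsum.congr fun p ↦ ?_
    rw [hterm, norm_div, norm_cpow_eq_rpow_re_of_pos (hp p)]
  have hF : ∀ y ∈ Ioi (0 : ℝ), HasSum (fun p ↦ a p * Real.exp (-q p * y))
      (Li s (Real.exp (-(x * y))) * Li r (Real.exp (-y))) := by
    intro y hy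
    have hr' := summable_norm_Li_terms r (Real.exp_pos _).le (exp_neg_mul_lt_one one_pos hy)
    have hs' := summable_norm_Li_terms s (Real.exp_pos _).le (exp_neg_mul_lt_one hx hy)
    have hmul := (summable_mul_of_summable_norm hr' hs').hasSum
    rw [← tsum_mul_tsum_of_summable_norm hr' hs'] at hmul
    convert! hmul using 1
    · funext p
      rw [Li_term_eq, Li_term_eq]
      have hexp : Real.exp (-q p * y) = Real.exp (-(((p.1 + 1 : ℕ) : ℝ) * 1) * y) *
          Real.exp (-(((p.2 + 1 : ℕ) : ℝ) * x) * y) := by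
        rw [← Real.exp_add]
        congr 1
        simp only [hq]
        ring
      rw [hexp, ofReal_mul, ha]
      simp only [one_div, mul_inv]
      ring
    · rw [one_mul]
      exact mul_comm _ _
  refine ⟨mellinConvergent_of_hasSum_exp hp ht hF hsum', ?_⟩
  rw [← (hasSum_mellin (fun p ↦ Or.inr (hp p)) ht hF hsum').tsum_eq]
  simp_rw [mul_div_assoc, ← hterm]
  rw [tsum_mul_left, hsum.of_norm.tsum_prod]
  rfl

theorem statement0 (x : ℝ) (hx : 0 < x) (r s t : ℂ)
    (hr : ∀ n : ℕ, 0 < n → r ≠ (n : ℂ))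
    (ht : max (max 0 (1 - r.re)) (max (1 - s.re) (2 - r.re - s.re)) < t.re)
    (M : ℕ) :
    MeasureTheory.IntegrableOn (integrandF r s x M t) (Set.Ioi 0) ∧
    Summable (fun p : ℕ × ℕ =>
      ‖1 / (((p.1 + 1 : ℕ) : ℂ) ^ r * ((p.2 + 1 : ℕ) : ℂ) ^ s *
        (((p.1 + 1 : ℕ) : ℂ) + ((p.2 + 1 : ℕ) : ℂ) * (x : ℂ)) ^ t)‖) ∧
    (1 / Complex.Gamma t) * ∫ y in Set.Ioi (0 : ℝ), integrandF r s x M t y =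
      Theta r s t x
      - Complex.Gamma (1 - r) * Complex.Gamma (t + r - 1) * riemannZeta (t + s + r - 1) /
          ((x : ℂ) ^ (t + r - 1) * Complex.Gamma t)
      - ∑ k ∈ Finset.range (M + 1),
          ((-1) ^ k / (Nat.factorial k : ℂ)) * riemannZeta (r - (k : ℕ)) *
            Complex.Gamma (t + (k : ℕ)) * riemannZeta (t + (k : ℕ) + s) /
            ((x : ℂ) ^ (t + (k : ℕ)) * Complex.Gamma t) := by
  obtain ⟨⟨ht0, hrt⟩, hst, hrst⟩ : (0 < t.re ∧ 1 - r.re < t.re) ∧ 1 - s.re < t.re ∧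
      2 - r.re - s.re < t.re := by simpa only [max_lt_iff] using ht
  have hΓ : Gamma t ≠ 0 := Gamma_ne_zero_of_re_pos ht0
  obtain ⟨hA, hA'⟩ := hasMellin_Li_mul_Li hx (r := r) (s := s) ht0 (by linarith) (by linarith)
    (by linarith)
  obtain ⟨hB, hB'⟩ := hasMellin_Li_exp (s := s) (a := t + r - 1) hx
    (by simp only [add_re, sub_re, one_re]; linarith)
    (by simp only [add_re, sub_re, one_re]; linarith)
  have hC (k : ℕ) : HasMellin (fun y : ℝ ↦ Li s (Real.exp (-(x * y)))) (t + k)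
      (Gamma (t + k) * riemannZeta (t + k + s) / (x : ℂ) ^ (t + k)) := by
    have hk : (0 : ℝ) ≤ k := k.cast_nonneg
    refine hasMellin_Li_exp hx ?_ ?_ <;> simp only [add_re, natCast_re] <;> linarith
  have hsplit : EqOn (integrandF r s x M t) (fun y : ℝ ↦
      (y : ℂ) ^ (t - 1) • (Li s (Real.exp (-(x * y))) * Li r (Real.exp (-y))) -
      Gamma (1 - r) * ((y : ℂ) ^ (t + r - 1 - 1) • Li s (Real.exp (-(x * y)))) -
      ∑ k ∈ Finset.range (M + 1), (-1) ^ k * riemannZeta (r - k) / (Nat.factorial k : ℂ) *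
        ((y : ℂ) ^ (t + k - 1) • Li s (Real.exp (-(x * y))))) (Ioi 0) := by
    intro y hy
    have hy0 : (y : ℂ) ≠ 0 := ofReal_ne_zero.2 (ne_of_gt hy)
    have h1 : (y : ℂ) ^ (t + r - 1 - 1) = (y : ℂ) ^ (t - 1) * (y : ℂ) ^ (r - 1) := by
      rw [← cpow_add _ _ hy0]; congr 1; ring
    have h2 (k : ℕ) : (y : ℂ) ^ (t + k - 1) = (y : ℂ) ^ (t - 1) * (y : ℂ) ^ k := by
      rw [← cpow_natCast, ← cpow_add _ _ hy0]; congr 1; ring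
    simp only [integrandF, smul_eq_mul, h1, h2, mul_sub, Finset.mul_sum]
    congr 1
    · ring
    · exact Finset.sum_congr rfl fun k _ ↦ by ring
  have hB1 := Integrable.const_mul hB (Gamma (1 - r))
  have hC1 (k : ℕ) := Integrable.const_mul (hC k).1
    ((-1) ^ k * riemannZeta (r - k) / (Nat.factorial k : ℂ))
  have hC2 := integrable_finsetSum (Finset.range (M + 1)) fun k _ ↦ hC1 k
  refine ⟨((hA.sub hB1).sub hC2).congr_fun hsplit.symm measurableSet_Ioi,
    summable_norm_mordellTornheim hx ht0 (by linarith) (by linarith) (by linarith), ?_⟩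
  rw [setIntegral_congr_fun measurableSet_Ioi hsplit]
  refine (congrArg _ <| (integral_sub (hA.sub hB1) hC2).trans <| congrArg₂ _
    (integral_sub hA hB1) (integral_finsetSum _ fun k _ ↦ hC1 k)).trans ?_
  simp only [integral_const_mul]
  rw [mellin] at hA' hB'
  have hC' (k : ℕ) := (hC k).2
  simp only [mellin] at hC'
  simp only [hA', hB', hC']
  rw [mul_sub, mul_sub, Finset.mul_sum]
  congr 1
  · congr 1
    · field_simp
    · rw [show t + r - 1 + s = t + s + r - 1 by ring]
      ring
  · exact Finset.sum_congr rfl fun k _ ↦ by ring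
end

section
/- Let r, t ∈ ℕ∪{0} with r+t ≥ 2, let x>0, and let s ∈ ℂ with Re(s) > 2−r−t and Re(s+t) > 1. Then Θ(r,s,t,x) = ∑_{i=0}^{r−2} ((−1)^i / x^{t+i}) C(i+t−1, i) ζ(s+t+i) ζ(r−i) − ((−1)^r / x^{r+t−1}) C(r+t−2, t−1) ∑_{m=1}^∞ ( γ + ψ(mx+1) ) / m^{r+s+t−1} + (−1)^r ∑_{j=0}^{t−2} C(j+r−1, j) ( (−1)^{t−j} / (t−j−1)! ) (1/x^{j+r}) ∑_{m=1}^∞ ψ^{(t−j−1)}(mx+1) / m^{r+s+j}, where all series converge absolutely. -/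
open Complex Filter Set

/-- Binomial coefficient `C(a,b)` for integer arguments, with the conventions
`C(-1,0) = 1`, `C(c,-1) = 0` for `c ≠ -1`, and `C(-1,-1) = 1`. -/
def binomC (a b : ℤ) : ℤ :=
  if a = -1 ∧ (b = 0 ∨ b = -1) then 1
  else if b < 0 ∨ a < 0 then 0
  else (a.toNat.choose b.toNat : ℤ)

/-- The digamma function `ψ(y) = -γ + ∑_{n=0}^∞ (1/(n+1) - 1/(n+y))` (for `y > 0`),
so that `γ + ψ(y+1) = ∑_{n=1}^∞ (1/n - 1/(n+y))`. -/
noncomputable def psi (y : ℝ) : ℝ :=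
  -Real.eulerMascheroniConstant + ∑' n : ℕ, (1 / ((n : ℝ) + 1) - 1 / ((n : ℝ) + y))

/-- The `k`-th polygamma function `ψ^{(k)}(y) = (-1)^{k+1} k! ∑_{n=0}^∞ (n+y)^{-(k+1)}`
(for `k ≥ 1` and `y > 0`), so that `ψ^{(k)}(y+1) = (-1)^{k+1} k! ∑_{n=1}^∞ (n+y)^{-(k+1)}`. -/
noncomputable def polygamma (k : ℕ) (y : ℝ) : ℝ :=
  (-1 : ℝ) ^ (k + 1) * (Nat.factorial k) * ∑' n : ℕ, ((n : ℝ) + y) ^ (-((k : ℤ) + 1))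

/-- The principal part at `u = 0` of the partial fraction expansion of
`1 / (u ^ r * (u + a) ^ t)`. -/
noncomputable def principalPart (r t : ℕ) (u a : ℂ) : ℂ :=
  ∑ i ∈ Finset.range r, (-1) ^ i * (Nat.multichoose t i : ℂ) / (a ^ (t + i) * u ^ (r - i))

lemma principalPart_succ_succ (r t : ℕ) {u a : ℂ} (hu : u ≠ 0) (ha : a ≠ 0) :
    principalPart (r + 1) (t + 1) u a =
      (principalPart (r + 1) t u a - principalPart r (t + 1) u a) / a := by
  simp only [principalPart, Finset.sum_range_succ' _ r]
  rw [eq_div_iff ha, add_mul, Finset.sum_mul, add_sub_right_comm, ← Finset.sum_sub_distrib]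
  congr 1
  · refine Finset.sum_congr rfl fun i _ => ?_
    rw [Nat.multichoose_succ_succ, Nat.add_sub_add_right]
    push_cast
    field_simp
    ring
  · simp only [Nat.multichoose_zero_right]
    field_simp
    ring

lemma principalPart_zero_right {r : ℕ} (hr : 0 < r) (u a : ℂ) :
    principalPart r 0 u a = 1 / u ^ r := by
  obtain ⟨r, rfl⟩ := Nat.exists_eq_succ_of_ne_zero hr.ne'
  simp [principalPart, Finset.sum_range_succ']

lemma principalPart_zero_left (t : ℕ) (u a : ℂ) : principalPart 0 t u a = 0 := by
  simp [principalPart]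

lemma one_div_pow_mul_pow_eq_principalPart {u v : ℂ} (hu : u ≠ 0) (hv : v ≠ 0) (huv : v - u ≠ 0) :
    ∀ r t : ℕ, 0 < r + t →
      1 / (u ^ r * v ^ t) = principalPart r t u (v - u) + principalPart t r v (u - v)
  | 0, 0, h => absurd h (lt_irrefl _)
  | r + 1, 0, _ => by simp [principalPart_zero_right, principalPart_zero_left]
  | 0, t + 1, _ => by simp [principalPart_zero_right, principalPart_zero_left]
  | r + 1, t + 1, _ => by
    have huv' : u - v ≠ 0 := fun h => huv (by linear_combination -h)
    rw [principalPart_succ_succ r t hu huv, principalPart_succ_succ t r hv huv']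
    have h₁ := one_div_pow_mul_pow_eq_principalPart hu hv huv (r + 1) t (by omega)
    have h₂ := one_div_pow_mul_pow_eq_principalPart hu hv huv r (t + 1) (by omega)
    have h : 1 / (u ^ (r + 1) * v ^ (t + 1)) =
        (1 / (u ^ (r + 1) * v ^ t) - 1 / (u ^ r * v ^ (t + 1))) / (v - u) := by
      field_simp
      ring
    rw [h, h₁, h₂, ← neg_sub v u]
    field_simp
    ring
termination_by r t => r + t

lemma binomC_eq_multichoose (t i : ℕ) : binomC ((i : ℤ) + t - 1) i = Nat.multichoose t i := by
  rcases Nat.eq_zero_or_pos (i + t) with h | h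
  · obtain ⟨rfl, rfl⟩ : i = 0 ∧ t = 0 := by omega
    simp [binomC]
  · rw [binomC, if_neg (by omega), if_neg (by omega), Nat.multichoose_eq]
    congr 2
    omega

lemma binomC_sub_two_sub_one (r : ℕ) {t : ℕ} (ht : 0 < t) :
    binomC ((r : ℤ) + t - 2) ((t : ℤ) - 1) = Nat.multichoose r (t - 1) := by
  rw [← binomC_eq_multichoose]
  congr 1 <;> omega

lemma multichoose_pred_comm {r t : ℕ} (hr : 0 < r) (ht : 0 < t) :
    Nat.multichoose r (t - 1) = Nat.multichoose t (r - 1) := by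
  rw [Nat.multichoose_eq, Nat.multichoose_eq, show t + (r - 1) - 1 = r + (t - 1) - 1 by omega]
  exact Nat.choose_symm_of_eq_add (by omega)

lemma principalPart_neg (r t : ℕ) (v a : ℂ) :
    principalPart t r v (-a) =
      (-1) ^ r * ∑ j ∈ Finset.range t, (Nat.multichoose r j : ℂ) / (a ^ (r + j) * v ^ (t - j)) := by
  rw [principalPart, Finset.mul_sum]
  refine Finset.sum_congr rfl fun j _ => ?_
  rw [neg_pow a, pow_add (-1 : ℂ) r j]
  rcases neg_one_pow_eq_or ℂ r with h | h <;> rcases neg_one_pow_eq_or ℂ j with h' | h' <;>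
    simp [h, h', neg_div, div_neg]

/-- The partial fraction expansion of `1 / (u ^ r * (u + a) ^ t)`, with the two simple-pole
terms combined. -/
lemma one_div_pow_mul_add_pow {r t : ℕ} (hrt : 2 ≤ r + t) {u a : ℂ} (hu : u ≠ 0) (ha : a ≠ 0)
    (hua : u + a ≠ 0) :
    1 / (u ^ r * (u + a) ^ t) =
      ∑ i ∈ Finset.range (r - 1), ((-1) ^ i / a ^ (t + i)) *
          ((binomC ((i : ℤ) + t - 1) i : ℤ) : ℂ) * (1 / u ^ (r - i))
      - ((-1) ^ r / a ^ (r + t - 1)) * ((binomC ((r : ℤ) + t - 2) ((t : ℤ) - 1) : ℤ) : ℂ) *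
          (1 / u - 1 / (u + a))
      + (-1) ^ r * ∑ j ∈ Finset.range (t - 1), ((binomC ((j : ℤ) + r - 1) j : ℤ) : ℂ) *
          (1 / a ^ (j + r)) * (1 / (u + a) ^ (t - j)) := by
  have key := one_div_pow_mul_pow_eq_principalPart hu hua (by simpa using ha) r t (by omega)
  rw [show u + a - u = a by ring, show u - (u + a) = -a by ring, principalPart_neg,
    principalPart] at key
  simp only [binomC_eq_multichoose, Int.cast_natCast]
  rcases r with _ | r
  · obtain ⟨t, rfl⟩ : ∃ k, t = k + 2 := ⟨t - 2, by omega⟩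
    rw [binomC_sub_two_sub_one 0 (by omega)]
    simp [Finset.sum_range_succ']
  rcases t with _ | t
  · obtain ⟨r, rfl⟩ : ∃ k, r = k + 1 := ⟨r - 1, by omega⟩
    have : binomC (((r + 1 + 1 : ℕ) : ℤ) + (0 : ℕ) - 2) ((0 : ℕ) - 1) = 0 := by
      rw [binomC, if_neg (by omega), if_pos (by omega)]
    rw [this]
    simp [Finset.sum_range_succ']
  rw [binomC_sub_two_sub_one (r + 1) (by omega), Int.cast_natCast, key, Finset.sum_range_succ _ r,
    Finset.sum_range_succ _ t]
  have hc := multichoose_pred_comm (r := r + 1) (t := t + 1) (by omega) (by omega)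
  simp only [Nat.add_sub_cancel] at hc ⊢
  rw [← hc, mul_add]
  have e₁ : ∑ i ∈ Finset.range r, (-1 : ℂ) ^ i * ((t + 1).multichoose i : ℂ) /
        (a ^ (t + 1 + i) * u ^ (r + 1 - i)) =
      ∑ i ∈ Finset.range r, (-1 : ℂ) ^ i / a ^ (t + 1 + i) * ((t + 1).multichoose i : ℂ) *
        (1 / u ^ (r + 1 - i)) :=
    Finset.sum_congr rfl fun i _ => by field_simp
  have e₂ : ∑ j ∈ Finset.range t, ((r + 1).multichoose j : ℂ) /
        (a ^ (r + 1 + j) * (u + a) ^ (t + 1 - j)) =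
      ∑ j ∈ Finset.range t, ((r + 1).multichoose j : ℂ) * (1 / a ^ (j + (r + 1))) *
        (1 / (u + a) ^ (t + 1 - j)) :=
    Finset.sum_congr rfl fun j _ => by rw [add_comm j]; field_simp
  rw [e₁, e₂, show t + 1 + r = r + t + 1 by omega, show r + 1 + t = r + t + 1 by omega,
    show r + 1 + (t + 1) - 1 = r + t + 1 by omega, show r + 1 - r = 1 by omega,
    show t + 1 - t = 1 by omega, pow_one, pow_one, pow_succ (-1 : ℂ) r]
  generalize Finset.sum (M := ℂ) (Finset.range r) _ = A
  generalize Finset.sum (M := ℂ) (Finset.range t) _ = B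
  field_simp
  ring

lemma summable_one_div_nat_add_one_rpow {a : ℝ} (ha : 1 < a) :
    Summable fun n : ℕ => 1 / ((n : ℝ) + 1) ^ a := by
  have := (summable_nat_add_iff 1).mpr (Real.summable_one_div_nat_rpow.mpr ha)
  simpa using this

/-- Absolute convergence of the Mordell–Tornheim double series. -/
lemma summable_mordellTornheim {r t : ℕ} (hrt : 2 ≤ r + t) {x : ℝ} (hx : 0 < x) {σ : ℝ}
    (h₁ : 2 < r + t + σ) (h₂ : 1 < σ + t) :
    Summable fun p : ℕ × ℕ => 1 / (((p.1 : ℝ) + 1) ^ r * ((p.2 : ℝ) + 1) ^ σ *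
      ((p.1 : ℝ) + 1 + ((p.2 : ℝ) + 1) * x) ^ t) := by
  obtain ⟨u, hu0, hut, hu1, hu2⟩ : ∃ u : ℝ, 0 ≤ u ∧ u ≤ t ∧ 1 < r + u ∧ 1 < σ + t - u := by
    have hrt' : (2 : ℝ) ≤ r + t := by exact_mod_cast hrt
    have ht : (0 : ℝ) ≤ t := t.cast_nonneg
    refine ⟨(max (0 : ℝ) (1 - r) + min (t : ℝ) (σ + t - 1)) / 2, ?_⟩
    rcases max_cases (0 : ℝ) (1 - r) with ⟨e, _⟩ | ⟨e, _⟩ <;>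
      rcases min_cases (t : ℝ) (σ + t - 1) with ⟨e', _⟩ | ⟨e', _⟩ <;>
      rw [e, e'] <;> refine ⟨?_, ?_, ?_, ?_⟩ <;> linarith
  have hc : 0 < min 1 x := lt_min one_pos hx
  set c := min 1 x
  refine Summable.of_nonneg_of_le (fun p => by positivity) (fun p => ?_)
    (((summable_one_div_nat_add_one_rpow hu1).mul_of_nonneg
      (summable_one_div_nat_add_one_rpow hu2)
      (fun n => by positivity) (fun n => by positivity)).mul_left (1 / c ^ t))
  obtain ⟨n, m⟩ := p
  simp only
  have hN : (0 : ℝ) < (n : ℝ) + 1 := by positivity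
  have hM : (0 : ℝ) < (m : ℝ) + 1 := by positivity
  generalize (n : ℝ) + 1 = N at hN ⊢
  generalize (m : ℝ) + 1 = M at hM ⊢
  have hMx : 0 < M * x := mul_pos hM hx
  have hNY : c * N ≤ N + M * x := by
    nlinarith [mul_le_mul_of_nonneg_right (min_le_left 1 x) hN.le]
  have hMY : c * M ≤ N + M * x := by
    nlinarith [mul_le_mul_of_nonneg_right (min_le_right 1 x) hM.le]
  have hY : 0 < N + M * x := by positivity
  have hpow : c ^ t * (N ^ u * M ^ (t - u)) ≤ (N + M * x) ^ t := by
    calc c ^ t * (N ^ u * M ^ (t - u)) = (c * N) ^ u * (c * M) ^ (t - u) := by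
          rw [Real.mul_rpow hc.le hN.le, Real.mul_rpow hc.le hM.le]
          have : c ^ t = c ^ u * c ^ (t - u) := by
            rw [← Real.rpow_add hc, add_sub_cancel, Real.rpow_natCast]
          rw [this]; ring
      _ ≤ (N + M * x) ^ u * (N + M * x) ^ (t - u) := by
          have := sub_nonneg.mpr hut
          gcongr
      _ = (N + M * x) ^ t := by
          rw [← Real.rpow_add hY, add_sub_cancel, Real.rpow_natCast]
  have e : 1 / c ^ t * (1 / N ^ (r + u) * (1 / M ^ (σ + t - u))) =
      1 / (N ^ r * M ^ σ * (c ^ t * (N ^ u * M ^ (t - u)))) := by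
    rw [Real.rpow_add hN, Real.rpow_natCast, add_sub_assoc, Real.rpow_add hM]
    field_simp
  rw [e]
  gcongr

lemma summable_one_div_nat_add_one_pow {k : ℕ} (hk : 2 ≤ k) :
    Summable fun n : ℕ => 1 / ((n : ℝ) + 1) ^ k := by
  have := (summable_nat_add_iff 1).mpr (Real.summable_one_div_nat_pow.mpr hk)
  simpa using this

lemma hasSum_one_div_nat_add_one_pow {k : ℕ} (hk : 2 ≤ k) :
    HasSum (fun n : ℕ => 1 / ((n : ℂ) + 1) ^ k) (riemannZeta k) := by
  have h := zeta_eq_tsum_one_div_nat_add_one_cpow (s := k) (by simpa using Nat.lt_of_succ_le hk)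
  simp only [cpow_natCast] at h
  rw [h]
  refine Summable.hasSum ?_
  refine (Complex.ofRealCLM.summable (summable_one_div_nat_add_one_pow hk)).congr fun n => ?_
  simp

lemma norm_natCast_add_one_cpow (m : ℕ) (w : ℂ) :
    ‖((m + 1 : ℕ) : ℂ) ^ w‖ = ((m : ℝ) + 1) ^ w.re := by
  rw [norm_natCast_cpow_of_pos m.succ_pos]
  push_cast
  rfl

lemma hasSum_one_div_nat_add_one_cpow {w : ℂ} (hw : 1 < w.re) :
    HasSum (fun n : ℕ => 1 / ((n + 1 : ℕ) : ℂ) ^ w) (riemannZeta w) := by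
  rw [zeta_eq_tsum_one_div_nat_add_one_cpow hw]
  simp only [← Nat.cast_succ]
  refine Summable.hasSum (Summable.of_norm ?_)
  simp only [norm_div, norm_one, norm_natCast_add_one_cpow]
  exact summable_one_div_nat_add_one_rpow hw

lemma one_div_sub_one_div_add (n : ℕ) {a : ℝ} (ha : 0 < a) :
    1 / ((n : ℝ) + 1) - 1 / ((n : ℝ) + (a + 1)) =
      a * (1 / (((n : ℝ) + 1) * ((n : ℝ) + 1 + a))) := by
  have : (n : ℝ) + (a + 1) ≠ 0 := by positivity
  have : (n : ℝ) + 1 + a ≠ 0 := by positivity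
  field_simp
  ring

lemma summable_one_div_sub_one_div_add {a : ℝ} (ha : 0 < a) :
    Summable fun n : ℕ => 1 / ((n : ℝ) + 1) - 1 / ((n : ℝ) + (a + 1)) := by
  simp only [one_div_sub_one_div_add _ ha]
  refine Summable.mul_left _ (Summable.of_nonneg_of_le (fun n => by positivity) (fun n => ?_)
    (summable_one_div_nat_add_one_pow le_rfl))
  rw [sq]
  exact one_div_le_one_div_of_le (by positivity)
    (mul_le_mul_of_nonneg_left (le_add_of_nonneg_right ha.le) (by positivity))

lemma gamma_add_psi_eq_tsum (y : ℝ) : Real.eulerMascheroniConstant + psi y =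
    ∑' n : ℕ, (1 / ((n : ℝ) + 1) - 1 / ((n : ℝ) + y)) := by
  rw [psi, add_neg_cancel_left]

lemma hasSum_gamma_add_psi {a : ℝ} (ha : 0 < a) :
    HasSum (fun n : ℕ => 1 / ((n : ℂ) + 1) - 1 / ((n : ℂ) + 1 + a))
      ((Real.eulerMascheroniConstant + psi (a + 1) : ℝ) : ℂ) := by
  rw [gamma_add_psi_eq_tsum]
  have := Complex.hasSum_ofReal.mpr (summable_one_div_sub_one_div_add ha).hasSum
  convert this using 2 with n
  push_cast
  ring

lemma polygamma_eq_tsum (k : ℕ) (a : ℝ) : polygamma k (a + 1) =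
    (-1) ^ (k + 1) * k.factorial * ∑' n : ℕ, 1 / ((n : ℝ) + 1 + a) ^ (k + 1) := by
  rw [polygamma]
  congr 2
  ext n
  rw [zpow_neg, one_div, show (n : ℝ) + (a + 1) = n + 1 + a by ring]
  norm_cast

lemma hasSum_polygamma {k : ℕ} (hk : 1 ≤ k) {a : ℝ} (ha : 0 < a) :
    HasSum (fun n : ℕ => 1 / ((n : ℂ) + 1 + a) ^ (k + 1))
      ((-1) ^ (k + 1) / k.factorial * ((polygamma k (a + 1) : ℝ) : ℂ)) := by
  have hs : Summable fun n : ℕ => 1 / ((n : ℝ) + 1 + a) ^ (k + 1) := by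
    refine Summable.of_nonneg_of_le (fun n => by positivity) (fun n => ?_)
      (summable_one_div_nat_add_one_pow (k := k + 1) (by omega))
    exact one_div_le_one_div_of_le (by positivity)
      (pow_le_pow_left₀ (by positivity) (le_add_of_nonneg_right ha.le) _)
  have := Complex.hasSum_ofReal.mpr hs.hasSum
  convert this using 1
  · ext n
    push_cast
    rfl
  · have hsq : ((-1 : ℂ) ^ (k + 1)) * (-1) ^ (k + 1) = 1 := by
      rw [← mul_pow]; simp
    have hk : (k.factorial : ℂ) ≠ 0 := by exact_mod_cast k.factorial_ne_zero
    rw [polygamma_eq_tsum]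
    push_cast
    field_simp
    linear_combination (∑' n : ℕ, 1 / ((n : ℂ) + 1 + a) ^ (k + 1)) * hsq

lemma summable_gamma_add_psi_div {x : ℝ} (hx : 0 < x) {w : ℂ} (hw : 1 < w.re) :
    Summable fun m : ℕ =>
      ‖((Real.eulerMascheroniConstant + psi (((m : ℝ) + 1) * x + 1) : ℝ) : ℂ) /
        ((m + 1 : ℕ) : ℂ) ^ w‖ := by
  have h := summable_mordellTornheim (r := 1) (t := 1) le_rfl hx (σ := w.re - 1)
    (by push_cast; linarith) (by push_cast; linarith)
  refine (h.prod_symm.prod.mul_left x).congr fun m => ?_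
  have hM : (0 : ℝ) < (m : ℝ) + 1 := by positivity
  rw [norm_div, norm_natCast_add_one_cpow, Complex.norm_real, gamma_add_psi_eq_tsum,
    tsum_congr fun n => one_div_sub_one_div_add n (mul_pos hM hx),
    Real.norm_of_nonneg (tsum_nonneg fun n => by positivity), ← tsum_div_const, ← tsum_mul_left]
  refine tsum_congr fun n => ?_
  simp only [Prod.fst_swap, Prod.snd_swap, pow_one]
  rw [Real.rpow_sub_one hM.ne']
  field_simp

lemma summable_polygamma_div {k : ℕ} (hk : 1 ≤ k) {x : ℝ} (hx : 0 < x) {w : ℂ}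
    (hw : 1 < w.re + k) :
    Summable fun m : ℕ => ‖((polygamma k (((m : ℝ) + 1) * x + 1) : ℝ) : ℂ) /
      ((m + 1 : ℕ) : ℂ) ^ w‖ := by
  have h := summable_mordellTornheim (r := 0) (t := k + 1) (by omega) hx (σ := w.re)
    (by push_cast; linarith) (by push_cast; linarith)
  refine (h.prod_symm.prod.mul_left (k.factorial : ℝ)).congr fun m => ?_
  have hM : (0 : ℝ) < (m : ℝ) + 1 := by positivity
  rw [norm_div, norm_natCast_add_one_cpow, Complex.norm_real, polygamma_eq_tsum, norm_mul, norm_mul,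
    norm_pow, norm_neg, norm_one, one_pow, one_mul, RCLike.norm_natCast,
    Real.norm_of_nonneg (tsum_nonneg fun n => by positivity), mul_div_assoc, ← tsum_div_const]
  congr 1
  refine tsum_congr fun n => ?_
  simp only [Prod.fst_swap, Prod.snd_swap, pow_zero, one_mul]
  field_simp

/-- The sum over `n` of the Mordell–Tornheim series for fixed `m`. -/
lemma tsum_mordellTornheim_inner {r t : ℕ} (hrt : 2 ≤ r + t) {x : ℝ} (hx : 0 < x) (s : ℂ)
    (m : ℕ) :
    ∑' n : ℕ, 1 / (((n + 1 : ℕ) : ℂ) ^ (r : ℂ) * ((m + 1 : ℕ) : ℂ) ^ s *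
      (((n + 1 : ℕ) : ℂ) + ((m + 1 : ℕ) : ℂ) * (x : ℂ)) ^ (t : ℂ)) =
      ∑ i ∈ Finset.range (r - 1),
          ((-1 : ℂ) ^ i / (x : ℂ) ^ (t + i)) * ((binomC ((i : ℤ) + t - 1) i : ℤ) : ℂ) *
            (1 / ((m + 1 : ℕ) : ℂ) ^ (s + (t : ℂ) + (i : ℂ))) * riemannZeta ((r : ℂ) - (i : ℂ))
      - ((-1 : ℂ) ^ r / (x : ℂ) ^ (r + t - 1)) *
          ((binomC ((r : ℤ) + t - 2) ((t : ℤ) - 1) : ℤ) : ℂ) *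
          (((Real.eulerMascheroniConstant + psi (((m : ℝ) + 1) * x + 1) : ℝ) : ℂ) /
            ((m + 1 : ℕ) : ℂ) ^ ((r : ℂ) + s + (t : ℂ) - 1))
      + (-1 : ℂ) ^ r * ∑ j ∈ Finset.range (t - 1),
          ((binomC ((j : ℤ) + r - 1) j : ℤ) : ℂ) *
            ((-1 : ℂ) ^ (t - j) / ((t - j - 1).factorial : ℂ)) * (1 / (x : ℂ) ^ (j + r)) *
            (((polygamma (t - j - 1) (((m : ℝ) + 1) * x + 1) : ℝ) : ℂ) /
              ((m + 1 : ℕ) : ℂ) ^ ((r : ℂ) + s + (j : ℂ))) := by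
  have ha : 0 < ((m : ℝ) + 1) * x := by positivity
  have hM : ((m + 1 : ℕ) : ℂ) ≠ 0 := by exact_mod_cast m.succ_ne_zero
  have hx0 : (x : ℂ) ≠ 0 := by exact_mod_cast hx.ne'
  have haC : ((((m : ℝ) + 1) * x : ℝ) : ℂ) = ((m + 1 : ℕ) : ℂ) * x := by push_cast; ring
  have hMs : ((m + 1 : ℕ) : ℂ) ^ s ≠ 0 := fun h => hM ((cpow_eq_zero_iff _ _).mp h).1
  have hcpow : ∀ k : ℕ, ((m + 1 : ℕ) : ℂ) ^ (s + k) =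
      ((m + 1 : ℕ) : ℂ) ^ s * ((m + 1 : ℕ) : ℂ) ^ k := fun k => by
    rw [cpow_add _ _ hM, cpow_natCast]
  have hpf : ∀ n : ℕ, 1 / (((n + 1 : ℕ) : ℂ) ^ (r : ℂ) * ((m + 1 : ℕ) : ℂ) ^ s *
      (((n + 1 : ℕ) : ℂ) + ((m + 1 : ℕ) : ℂ) * (x : ℂ)) ^ (t : ℂ)) =
      1 / ((m + 1 : ℕ) : ℂ) ^ s *
        (1 / (((n : ℂ) + 1) ^ r * ((n : ℂ) + 1 + ((((m : ℝ) + 1) * x : ℝ) : ℂ)) ^ t)) := by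
    intro n
    rw [haC, cpow_natCast, cpow_natCast, Nat.cast_add n 1, Nat.cast_one]
    ring
  have hne : ∀ n : ℕ, (n : ℂ) + 1 ≠ 0 := fun n => by exact_mod_cast n.succ_ne_zero
  have hne' : ∀ n : ℕ, (n : ℂ) + 1 + ((((m : ℝ) + 1) * x : ℝ) : ℂ) ≠ 0 := fun n => by
    have : (n : ℝ) + 1 + ((m : ℝ) + 1) * x ≠ 0 := by positivity
    exact_mod_cast this
  rw [tsum_congr hpf, tsum_mul_left, tsum_congr fun n =>
    one_div_pow_mul_add_pow hrt (hne n) (by exact_mod_cast ha.ne') (hne' n)]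
  have hζ : HasSum (fun n : ℕ => ∑ i ∈ Finset.range (r - 1),
      ((-1) ^ i / ((((m : ℝ) + 1) * x : ℝ) : ℂ) ^ (t + i)) *
        ((binomC ((i : ℤ) + t - 1) i : ℤ) : ℂ) * (1 / ((n : ℂ) + 1) ^ (r - i))) _ :=
    hasSum_sum fun i hi =>
      (hasSum_one_div_nat_add_one_pow (k := r - i)
        (by rw [Finset.mem_range] at hi; omega)).mul_left _
  have hpg : HasSum (fun n : ℕ => ∑ j ∈ Finset.range (t - 1),
      ((binomC ((j : ℤ) + r - 1) j : ℤ) : ℂ) *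
        (1 / ((((m : ℝ) + 1) * x : ℝ) : ℂ) ^ (j + r)) *
        (1 / ((n : ℂ) + 1 + ((((m : ℝ) + 1) * x : ℝ) : ℂ)) ^ (t - j - 1 + 1))) _ :=
    hasSum_sum fun j hj =>
      (hasSum_polygamma (k := t - j - 1) (by rw [Finset.mem_range] at hj; omega) ha).mul_left _
  have hpg' := (hpg.congr_fun (g := fun n : ℕ => ∑ j ∈ Finset.range (t - 1),
      ((binomC ((j : ℤ) + r - 1) j : ℤ) : ℂ) *
        (1 / ((((m : ℝ) + 1) * x : ℝ) : ℂ) ^ (j + r)) *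
        (1 / ((n : ℂ) + 1 + ((((m : ℝ) + 1) * x : ℝ) : ℂ)) ^ (t - j))) fun n =>
      Finset.sum_congr rfl fun j hj => by
        rw [Finset.mem_range] at hj
        rw [show t - j - 1 + 1 = t - j by omega])
  rw [((hζ.sub ((hasSum_gamma_add_psi ha).mul_left _)).add (hpg'.mul_left _)).tsum_eq,
    haC, mul_add, mul_sub, Finset.mul_sum, mul_left_comm _ ((-1 : ℂ) ^ r), Finset.mul_sum]
  congr 1
  · congr 1
    · refine Finset.sum_congr rfl fun i hi => ?_
      rw [Finset.mem_range] at hi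
      rw [show s + (t : ℂ) + i = s + (t + i : ℕ) by push_cast; ring, hcpow, mul_pow,
        Nat.cast_sub (by omega)]
      field_simp
    · rw [show (r : ℂ) + s + t - 1 = s + (r + t - 1 : ℕ) by
        rw [Nat.cast_sub (by omega)]; push_cast; ring, hcpow, mul_pow]
      field_simp
  · congr 1
    refine Finset.sum_congr rfl fun j hj => ?_
    rw [Finset.mem_range] at hj
    rw [show (r : ℂ) + s + j = s + (j + r : ℕ) by push_cast; ring, hcpow, mul_pow,
      show t - j - 1 + 1 = t - j by omega]
    field_simp

theorem statement11 (r t : ℕ) (hrt : 2 ≤ r + t) (x : ℝ) (hx : 0 < x) (s : ℂ)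
    (hs1 : 2 - (r : ℝ) - (t : ℝ) < s.re) (hs2 : 1 < s.re + t) :
    Summable (fun p : ℕ × ℕ =>
      ‖1 / (((p.1 + 1 : ℕ) : ℂ) ^ (r : ℂ) * ((p.2 + 1 : ℕ) : ℂ) ^ s *
        (((p.1 + 1 : ℕ) : ℂ) + ((p.2 + 1 : ℕ) : ℂ) * (x : ℂ)) ^ (t : ℂ))‖) ∧
    Summable (fun m : ℕ =>
      ‖((Real.eulerMascheroniConstant + psi (((m : ℝ) + 1) * x + 1) : ℝ) : ℂ) /
        ((m + 1 : ℕ) : ℂ) ^ ((r : ℂ) + s + (t : ℂ) - 1)‖) ∧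
    (∀ j ∈ Finset.range (t - 1),
      Summable (fun m : ℕ =>
        ‖((polygamma (t - j - 1) (((m : ℝ) + 1) * x + 1) : ℝ) : ℂ) /
          ((m + 1 : ℕ) : ℂ) ^ ((r : ℂ) + s + (j : ℂ))‖)) ∧
    Theta (r : ℂ) s (t : ℂ) x =
      ∑ i ∈ Finset.range (r - 1),
          ((-1 : ℂ) ^ i / (x : ℂ) ^ (t + i)) * ((binomC ((i : ℤ) + t - 1) i : ℤ) : ℂ) *
            riemannZeta (s + (t : ℂ) + (i : ℂ)) * riemannZeta ((r : ℂ) - (i : ℂ))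
      - ((-1 : ℂ) ^ r / (x : ℂ) ^ (r + t - 1)) *
          ((binomC ((r : ℤ) + t - 2) ((t : ℤ) - 1) : ℤ) : ℂ) *
          ∑' m : ℕ, ((Real.eulerMascheroniConstant + psi (((m : ℝ) + 1) * x + 1) : ℝ) : ℂ) /
            ((m + 1 : ℕ) : ℂ) ^ ((r : ℂ) + s + (t : ℂ) - 1)
      + (-1 : ℂ) ^ r * ∑ j ∈ Finset.range (t - 1),
          ((binomC ((j : ℤ) + r - 1) j : ℤ) : ℂ) *
            ((-1 : ℂ) ^ (t - j) / ((t - j - 1).factorial : ℂ)) * (1 / (x : ℂ) ^ (j + r)) *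
            ∑' m : ℕ, ((polygamma (t - j - 1) (((m : ℝ) + 1) * x + 1) : ℝ) : ℂ) /
              ((m + 1 : ℕ) : ℂ) ^ ((r : ℂ) + s + (j : ℂ)) := by
  have hΘ : Summable (fun p : ℕ × ℕ =>
      ‖1 / (((p.1 + 1 : ℕ) : ℂ) ^ (r : ℂ) * ((p.2 + 1 : ℕ) : ℂ) ^ s *
        (((p.1 + 1 : ℕ) : ℂ) + ((p.2 + 1 : ℕ) : ℂ) * (x : ℂ)) ^ (t : ℂ))‖) := by
    convert summable_mordellTornheim hrt hx (σ := s.re) (by linarith) hs2 using 2 with p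
    have h : ((p.1 + 1 : ℕ) : ℂ) + ((p.2 + 1 : ℕ) : ℂ) * (x : ℂ) =
        (((p.1 : ℝ) + 1 + ((p.2 : ℝ) + 1) * x : ℝ) : ℂ) := by push_cast; ring
    rw [h, norm_div, norm_mul, norm_mul, norm_one, norm_natCast_add_one_cpow,
      norm_natCast_add_one_cpow, cpow_natCast, norm_pow, Complex.norm_real,
      Real.norm_of_nonneg (by positivity), natCast_re, Real.rpow_natCast]
  have hψ := summable_gamma_add_psi_div hx (w := (r : ℂ) + s + (t : ℂ) - 1)
    (by simp; linarith)
  have hpoly : ∀ j ∈ Finset.range (t - 1), Summable (fun m : ℕ =>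
        ‖((polygamma (t - j - 1) (((m : ℝ) + 1) * x + 1) : ℝ) : ℂ) /
          ((m + 1 : ℕ) : ℂ) ^ ((r : ℂ) + s + (j : ℂ))‖) := by
    intro j hj
    rw [Finset.mem_range] at hj
    refine summable_polygamma_div (by omega) hx ?_
    have : ((t - j - 1 : ℕ) : ℝ) = t - j - 1 := by
      rw [Nat.cast_sub (by omega), Nat.cast_sub (by omega), Nat.cast_one]
    rw [this]
    simp
    linarith
  refine ⟨hΘ, hψ, hpoly, ?_⟩
  have hcomm := Summable.tsum_comm (f := fun n m : ℕ =>
    1 / (((n + 1 : ℕ) : ℂ) ^ (r : ℂ) * ((m + 1 : ℕ) : ℂ) ^ s *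
      (((n + 1 : ℕ) : ℂ) + ((m + 1 : ℕ) : ℂ) * (x : ℂ)) ^ (t : ℂ))) hΘ.of_norm
  rw [Theta, ← hcomm, tsum_congr fun m => tsum_mordellTornheim_inner hrt hx s m]
  have hζ := hasSum_sum fun i (_ : i ∈ Finset.range (r - 1)) =>
    ((hasSum_one_div_nat_add_one_cpow (w := s + (t : ℂ) + (i : ℂ)) (by
      have : (0 : ℝ) ≤ i := i.cast_nonneg
      simp only [add_re, natCast_re]
      linarith)).mul_left
        (((-1 : ℂ) ^ i / (x : ℂ) ^ (t + i)) * ((binomC ((i : ℤ) + t - 1) i : ℤ) : ℂ))).mul_right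
      (riemannZeta ((r : ℂ) - (i : ℂ)))
  have hpoly' := hasSum_sum fun j hj => (hpoly j hj).of_norm.hasSum.mul_left
    (((binomC ((j : ℤ) + r - 1) j : ℤ) : ℂ) *
      ((-1 : ℂ) ^ (t - j) / ((t - j - 1).factorial : ℂ)) * (1 / (x : ℂ) ^ (j + r)))
  exact ((hζ.sub (hψ.of_norm.hasSum.mul_left _)).add (hpoly'.mul_left _)).tsum_eq
end

section
/- For every x>0, the identity −∑_{m=1}^∞ ψ'(mx+1)/m² + ∑_{m=1}^∞ ψ'(m/x+1)/m² + (2/x) ∑_{m=1}^∞ ( γ + ψ(mx+1) )/m³ = ζ(2)² = π⁴/36 holds. -/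
theorem hasSum_one_div_succ_sq :
    HasSum (fun n : ℕ => 1 / ((n : ℝ) + 1) ^ 2) (Real.pi ^ 2 / 6) := by
  have h := (hasSum_nat_add_iff' 1).mpr hasSum_zeta_two
  simpa using h

theorem hasSum_one_div_succ_sq_mul :
    HasSum (fun p : ℕ × ℕ => 1 / ((p.1 : ℝ) + 1) ^ 2 * (1 / ((p.2 : ℝ) + 1) ^ 2))
      (Real.pi ^ 4 / 36) := by
  have h := hasSum_one_div_succ_sq
  have hs := h.summable.mul_of_nonneg h.summable
    (fun _ => by dsimp; positivity) (fun _ => by dsimp; positivity)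
  rw [show Real.pi ^ 4 / 36 = Real.pi ^ 2 / 6 * (Real.pi ^ 2 / 6) by ring]
  exact h.mul h hs

theorem polygamma_one_div_sq (y c : ℝ) :
    polygamma 1 y / c ^ 2 = ∑' n : ℕ, 1 / (c ^ 2 * ((n : ℝ) + y) ^ 2) := by
  have h (n : ℕ) :
      1 / (c ^ 2 * ((n : ℝ) + y) ^ 2) = ((n : ℝ) + y) ^ (-(((1 : ℕ) : ℤ) + 1)) / c ^ 2 := by
    have : (-(((1 : ℕ) : ℤ) + 1)) = -((2 : ℕ) : ℤ) := by norm_num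
    rw [this, zpow_neg, zpow_natCast, one_div, mul_inv, div_eq_mul_inv, mul_comm]
  simp only [h, tsum_div_const, polygamma]
  norm_num

theorem eulerMascheroniConstant_add_psi_succ {y : ℝ} (hy : 0 < y) :
    Real.eulerMascheroniConstant + psi (y + 1) =
      ∑' n : ℕ, y / (((n : ℝ) + 1) * ((n : ℝ) + (y + 1))) := by
  rw [psi, add_neg_cancel_left]
  refine tsum_congr fun n => ?_
  field_simp
  ring

theorem statement12 (x : ℝ) (hx : 0 < x) :
    (-(∑' m : ℕ, polygamma 1 (((m : ℝ) + 1) * x + 1) / ((m : ℝ) + 1) ^ 2)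
        + (∑' m : ℕ, polygamma 1 (((m : ℝ) + 1) / x + 1) / ((m : ℝ) + 1) ^ 2)
        + (2 / x) * ∑' m : ℕ,
            (Real.eulerMascheroniConstant + psi (((m : ℝ) + 1) * x + 1)) / ((m : ℝ) + 1) ^ 3
      = Real.pi ^ 4 / 36) ∧
    (riemannZeta 2) ^ 2 = ((Real.pi ^ 4 / 36 : ℝ) : ℂ) := by
  refine ⟨?_, by rw [riemannZeta_two]; push_cast; ring⟩
  have hP := hasSum_one_div_succ_sq_mul
  have bound {y : ℝ} (hy : 0 < y) : Summable (fun p : ℕ × ℕ =>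
      1 / (((p.1 : ℝ) + 1) ^ 2 * ((p.2 : ℝ) + (((p.1 : ℝ) + 1) * y + 1)) ^ 2)) := by
    refine hP.summable.of_nonneg_of_le (fun _ => by positivity) fun p => ?_
    rw [one_div_mul_one_div]
    have : 0 ≤ ((p.1 : ℝ) + 1) * y := by positivity
    gcongr
    linarith
  have hA := bound hx
  have hB := bound (inv_pos.mpr hx)
  have hB_swap := hB.prod_symm
  -- Partial fractions: with `a = n + 1`, `b = (m + 1) x` and `s = a + b`,
  -- `1 / (a² b²) = -1 / (b² s²) + 1 / (a² s²) + 2 / (a b² s)`.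
  have key (p : ℕ × ℕ) :
      2 / (((p.1 : ℝ) + 1) ^ 2 * (((p.2 : ℝ) + 1) *
          ((p.2 : ℝ) + (((p.1 : ℝ) + 1) * x + 1)))) =
        1 / ((p.1 : ℝ) + 1) ^ 2 * (1 / ((p.2 : ℝ) + 1) ^ 2)
        + 1 / (((p.1 : ℝ) + 1) ^ 2 * ((p.2 : ℝ) + (((p.1 : ℝ) + 1) * x + 1)) ^ 2)
        - 1 / (((p.2 : ℝ) + 1) ^ 2 * ((p.1 : ℝ) + (((p.2 : ℝ) + 1) * x⁻¹ + 1)) ^ 2) := by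
    have h : (p.1 : ℝ) + (((p.2 : ℝ) + 1) * x⁻¹ + 1) =
        ((p.2 : ℝ) + (((p.1 : ℝ) + 1) * x + 1)) / x := by
      field_simp
      ring
    rw [h]
    have hs : (p.2 : ℝ) + (((p.1 : ℝ) + 1) * x + 1) ≠ 0 := by positivity
    field_simp
    ring
  have hC := (hP.add hA.hasSum).sub hB_swap.hasSum
  have hC' := (funext key) ▸ hC
  have eA : ∑' m : ℕ, polygamma 1 (((m : ℝ) + 1) * x + 1) / ((m : ℝ) + 1) ^ 2 = _ :=
    (tsum_congr fun m => polygamma_one_div_sq _ _).trans hA.tsum_prod.symm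
  have eB : ∑' m : ℕ, polygamma 1 (((m : ℝ) + 1) / x + 1) / ((m : ℝ) + 1) ^ 2 = _ :=
    (tsum_congr fun m => polygamma_one_div_sq _ _).trans hB.tsum_prod.symm
  have eC : (2 / x) * ∑' m : ℕ,
      (Real.eulerMascheroniConstant + psi (((m : ℝ) + 1) * x + 1)) / ((m : ℝ) + 1) ^ 3 =
      ∑' p : ℕ × ℕ, 2 / (((p.1 : ℝ) + 1) ^ 2 * (((p.2 : ℝ) + 1) *
          ((p.2 : ℝ) + (((p.1 : ℝ) + 1) * x + 1)))) := by
    rw [hC'.summable.tsum_prod, ← tsum_mul_left]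
    refine tsum_congr fun m => ?_
    rw [eulerMascheroniConstant_add_psi_succ (by positivity), ← tsum_div_const, ← tsum_mul_left]
    refine tsum_congr fun n => ?_
    field_simp
  have eS := (Equiv.prodComm ℕ ℕ).tsum_eq (fun p : ℕ × ℕ =>
      1 / (((p.1 : ℝ) + 1) ^ 2 * ((p.2 : ℝ) + (((p.1 : ℝ) + 1) * x⁻¹ + 1)) ^ 2))
  simp only [Equiv.prodComm_apply, Prod.fst_swap, Prod.snd_swap] at eS
  have eT := hC'.tsum_eq
  simp only [Prod.fst_swap, Prod.snd_swap] at eT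
  rw [eA, eB, eC, eT, eS]
  ring
end

section
/- Let r ∈ ℕ with r ≥ 2, let t ∈ ℕ∪{0}, and let x>0. Let G(s) be the analytic continuation of Θ(r,s,t,x) in the second variable defined in the context. Then G has a simple pole at s₀ := 1−t with residue x^{−t} ζ(r), and lim_{s→s₀} ( G(s) − x^{−t} ζ(r)/(s−s₀) ) = γ ζ(r) x^{−t} + (−1)^r ∑_{j=0}^{t−2} C(j+r−1,j) ((−1)^{t−j}/(t−j−1)!) x^{−(j+r)} ∑_{m=1}^∞ ψ^{(t−j−1)}(mx+1)/m^{r+j−t+1} + ∑_{i=1}^{r−2} (−1)^i x^{−(t+i)} C(i+t−1,i) ζ(i+1) ζ(r−i) − (−1)^r x^{1−r−t} C(r+t−2,t−1) ∑_{m=1}^∞ ( γ + ψ(mx+1) )/m^{r}, the limit being taken through Re(s) > 2−r−t. -/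
open Complex Filter Set

/-- The analytic continuation `G(s)` of `Θ(r,s,t,x)` in the second variable
(Theorem `THM-EVAL` / `KLF in s`). -/
noncomputable def G (r t : ℕ) (x : ℝ) (s : ℂ) : ℂ :=
  ∑ i ∈ Finset.range (r - 1),
      (-1 : ℂ) ^ i * (x : ℂ) ^ (-((t : ℤ) + i)) * ((binomC ((i : ℤ) + t - 1) i : ℤ) : ℂ) *
        riemannZeta (s + (t : ℂ) + (i : ℂ)) * riemannZeta ((r : ℂ) - (i : ℂ))
  - (-1 : ℂ) ^ r * (x : ℂ) ^ (1 - (r : ℤ) - (t : ℤ)) *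
      ((binomC ((r : ℤ) + t - 2) ((t : ℤ) - 1) : ℤ) : ℂ) *
      ∑' m : ℕ, ((Real.eulerMascheroniConstant + psi (((m : ℝ) + 1) * x + 1) : ℝ) : ℂ) /
        ((m + 1 : ℕ) : ℂ) ^ ((r : ℂ) + s + (t : ℂ) - 1)
  + (-1 : ℂ) ^ r * ∑ j ∈ Finset.range (t - 1),
      ((binomC ((j : ℤ) + r - 1) j : ℤ) : ℂ) *
        ((-1 : ℂ) ^ (t - j) / ((t - j - 1).factorial : ℂ)) * (x : ℂ) ^ (-((j : ℤ) + r)) *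
        ∑' m : ℕ, ((polygamma (t - j - 1) (((m : ℝ) + 1) * x + 1) : ℝ) : ℂ) /
          ((m + 1 : ℕ) : ℂ) ^ ((r : ℂ) + s + (j : ℂ))

/-- A Dirichlet series with coefficients `O((m + 1) ^ p)` is continuous where it converges
absolutely for this reason. -/
lemma continuousAt_tsum_div_cpow {a : ℕ → ℝ} {C p : ℝ} {w₀ : ℂ}
    (ha : ∀ m, |a m| ≤ C * ((m : ℝ) + 1) ^ p) (hw : p + 1 < w₀.re) :
    ContinuousAt (fun w : ℂ => ∑' m : ℕ, (a m : ℂ) / ((m + 1 : ℕ) : ℂ) ^ w) w₀ := by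
  obtain ⟨q, hpq, hq⟩ := exists_between hw
  refine tendsto_tsum_of_dominated_convergence
    (bound := fun m : ℕ => C * ((m : ℝ) + 1) ^ (p - q)) ?_ ?_ ?_
  · have h := (Real.summable_nat_rpow (p := p - q)).2 (by linarith)
    have h' := ((summable_nat_add_iff 1).2 h).mul_left C
    simpa using h'
  · intro m
    have hm : ((m + 1 : ℕ) : ℂ) ≠ 0 := Nat.cast_ne_zero.2 m.succ_ne_zero
    have h : ContinuousAt (fun w : ℂ => (a m : ℂ) / ((m + 1 : ℕ) : ℂ) ^ w) w₀ :=
      continuousAt_const.div (continuousAt_const_cpow hm)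
        (by rw [Ne, Complex.cpow_eq_zero_iff]; exact fun h => hm h.1)
    exact h
  · filter_upwards [(isOpen_lt continuous_const Complex.continuous_re).mem_nhds hq] with w hw m
    have hm : (0 : ℝ) < (m : ℝ) + 1 := by positivity
    have hle : (1 : ℝ) ≤ (m : ℝ) + 1 := by simp
    rw [norm_div, Complex.norm_natCast_cpow_of_pos m.succ_pos, Complex.norm_real, Real.norm_eq_abs,
      Real.rpow_sub hm, ← mul_div_assoc]
    push_cast
    have hwq : q ≤ w.re := le_of_lt hw
    gcongr
    · exact (abs_nonneg _).trans (ha m)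
    · exact ha m

lemma hasSum_succ_rpow_neg_three_halves :
    HasSum (fun n : ℕ => ((n : ℝ) + 1) ^ (-(3 / 2) : ℝ))
      (∑' n : ℕ, ((n : ℝ) + 1) ^ (-(3 / 2) : ℝ)) := by
  have h := (Real.summable_nat_rpow (p := -(3 / 2))).2 (by norm_num)
  have h' := (summable_nat_add_iff 1).2 h
  exact Summable.hasSum (by simpa using h')

lemma abs_eulerMascheroni_add_psi_le {y : ℝ} (hy : 0 < y) :
    |Real.eulerMascheroniConstant + psi (y + 1)| ≤
      (∑' n : ℕ, ((n : ℝ) + 1) ^ (-(3 / 2) : ℝ)) * y ^ (1 / 2 : ℝ) := by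
  rw [psi, add_neg_cancel_left, ← Real.norm_eq_abs]
  refine tsum_of_norm_bounded (hasSum_succ_rpow_neg_three_halves.mul_right _) fun n => ?_
  have hn : (0 : ℝ) < (n : ℝ) + 1 := by positivity
  set b : ℝ := (n : ℝ) + 1 with hb
  have hdiff : 1 / b - 1 / ((n : ℝ) + (y + 1)) = y / (b * (b + y)) := by
    rw [show (n : ℝ) + (y + 1) = b + y by rw [hb]; ring]
    field_simp
    ring
  rw [hdiff, Real.norm_of_nonneg (by positivity), Real.rpow_neg hn.le,
    show (3 / 2 : ℝ) = 1 + 1 / 2 by norm_num, Real.rpow_add hn, Real.rpow_one,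
    ← Real.sqrt_eq_rpow, ← Real.sqrt_eq_rpow, inv_mul_eq_div, div_le_div_iff₀ (by positivity)
      (by positivity)]
  have h1 := Real.sq_sqrt hn.le
  have h2 := Real.sq_sqrt hy.le
  have hc : √b * √y ≤ b + y := by nlinarith [sq_nonneg (√b - √y)]
  calc y * (b * √b) = √y * b * (√b * √y) := by
        linear_combination (-(b * √b)) * h2
    _ ≤ √y * b * (b + y) := by gcongr
    _ = √y * (b * (b + y)) := by ring

lemma abs_polygamma_add_one_le {k : ℕ} (hk : 1 ≤ k) {y : ℝ} (hy : 0 < y) :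
    |polygamma k (y + 1)| ≤
      k.factorial * (∑' n : ℕ, ((n : ℝ) + 1) ^ (-(3 / 2) : ℝ)) * y ^ (1 / 2 - k : ℝ) := by
  rw [polygamma, abs_mul, abs_mul, abs_pow, abs_neg, abs_one, one_pow, one_mul, Nat.abs_cast,
    mul_assoc]
  gcongr
  rw [← Real.norm_eq_abs]
  refine tsum_of_norm_bounded (hasSum_succ_rpow_neg_three_halves.mul_right _) fun n => ?_
  have hn : (0 : ℝ) < (n : ℝ) + 1 := by positivity
  have hny : (0 : ℝ) < (n : ℝ) + (y + 1) := by positivity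
  have hk' : (1 : ℝ) ≤ k := by exact_mod_cast hk
  rw [Real.norm_of_nonneg (by positivity), ← Real.rpow_intCast,
    show ((-((k : ℤ) + 1) : ℤ) : ℝ) = -(3 / 2) + (1 / 2 - k) by push_cast; ring,
    Real.rpow_add hny]
  gcongr ?_ * ?_
  · exact Real.rpow_le_rpow_of_nonpos hn (by linarith) (by norm_num)
  · exact Real.rpow_le_rpow_of_nonpos hy (by linarith) (by linarith)

lemma continuousAt_tsum_psi_div_cpow {x : ℝ} (hx : 0 < x) {w₀ : ℂ} (hw : 3 / 2 < w₀.re) :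
    ContinuousAt (fun w : ℂ => ∑' m : ℕ,
      ((Real.eulerMascheroniConstant + psi (((m : ℝ) + 1) * x + 1) : ℝ) : ℂ) /
        ((m + 1 : ℕ) : ℂ) ^ w) w₀ := by
  refine continuousAt_tsum_div_cpow (p := 1 / 2)
    (C := (∑' n : ℕ, ((n : ℝ) + 1) ^ (-(3 / 2) : ℝ)) * x ^ (1 / 2 : ℝ)) (fun m => ?_)
    (by linarith)
  refine (abs_eulerMascheroni_add_psi_le (by positivity)).trans_eq ?_
  rw [Real.mul_rpow (by positivity) hx.le]
  ring

lemma continuousAt_tsum_polygamma_div_cpow {k : ℕ} (hk : 1 ≤ k) {x : ℝ} (hx : 0 < x) {w₀ : ℂ}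
    (hw : 3 / 2 < w₀.re + k) :
    ContinuousAt (fun w : ℂ => ∑' m : ℕ,
      ((polygamma k (((m : ℝ) + 1) * x + 1) : ℝ) : ℂ) / ((m + 1 : ℕ) : ℂ) ^ w) w₀ := by
  refine continuousAt_tsum_div_cpow (p := 1 / 2 - k)
    (C := k.factorial * (∑' n : ℕ, ((n : ℝ) + 1) ^ (-(3 / 2) : ℝ)) * x ^ (1 / 2 - k : ℝ))
    (fun m => ?_) (by linarith)
  refine (abs_polygamma_add_one_le hk (by positivity)).trans_eq ?_
  rw [Real.mul_rpow (by positivity) hx.le]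
  ring

lemma binomC_sub_one_zero (t : ℕ) : binomC ((t : ℤ) - 1) 0 = 1 := by
  rcases t with _ | t <;> simp [binomC]

theorem statement14 (r : ℕ) (hr : 2 ≤ r) (t : ℕ) (x : ℝ) (hx : 0 < x) :
    Filter.Tendsto
      (fun s : ℂ =>
        G r t x s - (x : ℂ) ^ (-(t : ℤ)) * riemannZeta (r : ℂ) / (s - (1 - (t : ℂ))))
      (nhdsWithin (1 - (t : ℂ))
        ({s : ℂ | 2 - (r : ℝ) - (t : ℝ) < s.re} \ {1 - (t : ℂ)}))
      (nhds
        ((Real.eulerMascheroniConstant : ℂ) * riemannZeta (r : ℂ) * (x : ℂ) ^ (-(t : ℤ))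
          + (-1 : ℂ) ^ r * ∑ j ∈ Finset.range (t - 1),
              ((binomC ((j : ℤ) + r - 1) j : ℤ) : ℂ) *
                ((-1 : ℂ) ^ (t - j) / ((t - j - 1).factorial : ℂ)) *
                (x : ℂ) ^ (-((j : ℤ) + r)) *
                ∑' m : ℕ, ((polygamma (t - j - 1) (((m : ℝ) + 1) * x + 1) : ℝ) : ℂ) /
                  ((m + 1 : ℕ) : ℂ) ^ ((r : ℂ) + (j : ℂ) - (t : ℂ) + 1)
          + ∑ i ∈ Finset.Icc 1 (r - 2),
              (-1 : ℂ) ^ i * (x : ℂ) ^ (-((t : ℤ) + i)) *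
                ((binomC ((i : ℤ) + t - 1) i : ℤ) : ℂ) *
                riemannZeta ((i : ℂ) + 1) * riemannZeta ((r : ℂ) - (i : ℂ))
          - (-1 : ℂ) ^ r * (x : ℂ) ^ (1 - (r : ℤ) - (t : ℤ)) *
              ((binomC ((r : ℤ) + t - 2) ((t : ℤ) - 1) : ℤ) : ℂ) *
              ∑' m : ℕ, ((Real.eulerMascheroniConstant + psi (((m : ℝ) + 1) * x + 1) : ℝ) : ℂ) /
                ((m + 1 : ℕ) : ℂ) ^ (r : ℕ))) := by
  set s₀ : ℂ := 1 - (t : ℂ) with hs₀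
  set l := nhdsWithin s₀ ({s : ℂ | 2 - (r : ℝ) - (t : ℝ) < s.re} \ {s₀})
  have hle : l ≤ nhds s₀ := nhdsWithin_le_nhds
  have hpunct : l ≤ nhdsWithin s₀ {s₀}ᶜ := nhdsWithin_mono _ fun s hs => hs.2
  have hr' : (2 : ℝ) ≤ r := by exact_mod_cast hr
  have hpole : Tendsto (fun s : ℂ => riemannZeta (s + t) - 1 / (s - s₀)) l
      (nhds (Real.eulerMascheroniConstant : ℂ)) := by
    have hshift : Tendsto (fun s : ℂ => s + t) l (nhdsWithin 1 {1}ᶜ) := by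
      refine tendsto_nhdsWithin_iff.2 ⟨?_, ?_⟩
      · have h : Tendsto (fun s : ℂ => s + t) (nhds s₀) (nhds (s₀ + t)) :=
          (continuous_id.add continuous_const).tendsto s₀
        rw [hs₀, sub_add_cancel] at h
        exact h.mono_left hle
      · filter_upwards [hpunct self_mem_nhdsWithin] with s hs h
        exact hs (eq_sub_of_add_eq h)
    refine (tendsto_riemannZeta_sub_one_div.comp hshift).congr fun s => ?_
    simp only [Function.comp, hs₀]
    ring_nf
  have hpsi : Tendsto (fun s : ℂ => ∑' m : ℕ,
      ((Real.eulerMascheroniConstant + psi (((m : ℝ) + 1) * x + 1) : ℝ) : ℂ) /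
        ((m + 1 : ℕ) : ℂ) ^ ((r : ℂ) + s + (t : ℂ) - 1)) l
      (nhds (∑' m : ℕ, ((Real.eulerMascheroniConstant + psi (((m : ℝ) + 1) * x + 1) : ℝ) : ℂ) /
        ((m + 1 : ℕ) : ℂ) ^ (r : ℕ))) := by
    have hexp : Tendsto (fun s : ℂ => (r : ℂ) + s + (t : ℂ) - 1) l (nhds (r : ℂ)) := by
      have h : Continuous fun s : ℂ => (r : ℂ) + s + (t : ℂ) - 1 := by fun_prop
      have h' := (h.tendsto s₀).mono_left hle
      rwa [show (r : ℂ) + s₀ + (t : ℂ) - 1 = r by rw [hs₀]; ring] at h'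
    have h := (continuousAt_tsum_psi_div_cpow hx (w₀ := (r : ℂ))
      (by rw [Complex.natCast_re]; linarith)).tendsto.comp hexp
    simp only [Complex.cpow_natCast] at h
    exact h
  have hpoly : ∀ j ∈ Finset.range (t - 1), Tendsto (fun s : ℂ => ∑' m : ℕ,
      ((polygamma (t - j - 1) (((m : ℝ) + 1) * x + 1) : ℝ) : ℂ) /
        ((m + 1 : ℕ) : ℂ) ^ ((r : ℂ) + s + (j : ℂ))) l
      (nhds (∑' m : ℕ, ((polygamma (t - j - 1) (((m : ℝ) + 1) * x + 1) : ℝ) : ℂ) /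
        ((m + 1 : ℕ) : ℂ) ^ ((r : ℂ) + (j : ℂ) - (t : ℂ) + 1))) := by
    intro j hj
    rw [Finset.mem_range] at hj
    have hexp : Tendsto (fun s : ℂ => (r : ℂ) + s + (j : ℂ)) l
        (nhds ((r : ℂ) + (j : ℂ) - (t : ℂ) + 1)) := by
      have h : Continuous fun s : ℂ => (r : ℂ) + s + (j : ℂ) := by fun_prop
      have h' := (h.tendsto s₀).mono_left hle
      rwa [show (r : ℂ) + s₀ + (j : ℂ) = r + j - t + 1 by rw [hs₀]; ring] at h'
    refine (continuousAt_tsum_polygamma_div_cpow (k := t - j - 1) (by lia) hx ?_).tendsto.comp hexp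
    have hcast : ((t - j - 1 : ℕ) : ℝ) = t - j - 1 := by
      rw [Nat.cast_sub (by lia), Nat.cast_sub (by lia), Nat.cast_one]
    rw [hcast]
    simp only [Complex.add_re, Complex.sub_re, Complex.natCast_re, Complex.one_re]
    linarith
  have hzeta : ∀ i ∈ Finset.Icc 1 (r - 2), Tendsto
      (fun s : ℂ => riemannZeta (s + (t : ℂ) + (i : ℂ))) l
      (nhds (riemannZeta ((i : ℂ) + 1))) := by
    intro i hi
    have hi0 : (i : ℂ) ≠ 0 := Nat.cast_ne_zero.2 (by have := (Finset.mem_Icc.1 hi).1; lia)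
    have hexp : Tendsto (fun s : ℂ => s + (t : ℂ) + (i : ℂ)) l (nhds ((i : ℂ) + 1)) := by
      have h : Continuous fun s : ℂ => s + (t : ℂ) + (i : ℂ) := by fun_prop
      have h' := (h.tendsto s₀).mono_left hle
      rwa [show s₀ + (t : ℂ) + (i : ℂ) = i + 1 by rw [hs₀]; ring] at h'
    exact (differentiableAt_riemannZeta (by simpa using hi0)).continuousAt.tendsto.comp hexp
  have hsplit : ∀ f : ℕ → ℂ,
      ∑ i ∈ Finset.range (r - 1), f i = f 0 + ∑ i ∈ Finset.Icc 1 (r - 2), f i := by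
    intro f
    rw [show r - 1 = (r - 2) + 1 by lia, Finset.range_eq_Ico,
      Finset.sum_eq_sum_Ico_succ_bot (by lia)]
    rfl
  have hlim := (((hpole.mul_const (riemannZeta (r : ℂ))).mul_const ((x : ℂ) ^ (-(t : ℤ)))).add
    ((tendsto_finsetSum _ fun j hj => (hpoly j hj).const_mul
      (((binomC ((j : ℤ) + r - 1) j : ℤ) : ℂ) *
        ((-1 : ℂ) ^ (t - j) / ((t - j - 1).factorial : ℂ)) *
        (x : ℂ) ^ (-((j : ℤ) + r)))).const_mul ((-1 : ℂ) ^ r))).add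
    (tendsto_finsetSum _ fun i hi => ((hzeta i hi).const_mul
      ((-1 : ℂ) ^ i * (x : ℂ) ^ (-((t : ℤ) + i)) *
        ((binomC ((i : ℤ) + t - 1) i : ℤ) : ℂ))).mul_const (riemannZeta ((r : ℂ) - (i : ℂ))))
  refine (hlim.sub (hpsi.const_mul ((-1 : ℂ) ^ r * (x : ℂ) ^ (1 - (r : ℤ) - (t : ℤ)) *
    ((binomC ((r : ℤ) + t - 2) ((t : ℤ) - 1) : ℤ) : ℂ)))).congr fun s => ?_
  rw [G, hsplit]
  simp only [Nat.cast_zero, zero_add, add_zero, sub_zero, pow_zero, one_mul, binomC_sub_one_zero,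
    Int.cast_one, mul_one]
  ring
end
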